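/- arXiv:dg-ga/9505007 — 2 statements merged into one kernel-verified Lean document; each statement's English description precedes it below -/
import Mathlib

section
/- Let Γ be a nontrivial finite abelian group and ρ: Γ → O(n+1) a fixed point free orthogonal representation that decomposes as an orthogonal direct sum ρ = ρ₁ ⊕ ⋯ ⊕ ρ_k of k ≥ 2 irreducible subrepresentations. If ρ_i is equivalent to ρ_j for some i ≠ j, then the quotient S^n/ρ(Γ) has radius π/2; in particular, for every unit vector u ∈ ℝ^{n+1} there is a unit vector v with ⟨ρ(g)u, v⟩ ≤ 0 for all g ∈ Γ. -/
open scoped RealInnerProductSpace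

section Defs

variable {Γ : Type*} [Group Γ] {E : Type*} [NormedAddCommGroup E] [InnerProductSpace ℝ E]

/-- A subspace `W` is invariant under the orthogonal representation `ρ`. -/
def IsInvariantSubspace (ρ : Γ →* (E ≃ₗᵢ[ℝ] E)) (W : Submodule ℝ E) : Prop :=
  ∀ g : Γ, ∀ x ∈ W, ρ g x ∈ W

/-- A nonzero invariant subspace `W` is an irreducible subrepresentation of `ρ` if it
contains no invariant subspace other than `⊥` and itself. -/
def IsIrreducibleSubrep (ρ : Γ →* (E ≃ₗᵢ[ℝ] E)) (W : Submodule ℝ E) : Prop :=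
  W ≠ ⊥ ∧ IsInvariantSubspace ρ W ∧
    ∀ U : Submodule ℝ E, U ≤ W → IsInvariantSubspace ρ U → U = ⊥ ∨ U = W

/-- Two invariant subspaces carry equivalent subrepresentations of `ρ` if there is an
orthogonal (isometric linear) isomorphism between them intertwining the actions. -/
def AreEquivalentSubreps (ρ : Γ →* (E ≃ₗᵢ[ℝ] E)) (W₁ W₂ : Submodule ℝ E) : Prop :=
  ∃ e : W₁ ≃ₗᵢ[ℝ] W₂, ∀ (g : Γ) (x : W₁) (hx : ρ g (x : E) ∈ W₁),
    ((e ⟨ρ g (x : E), hx⟩ : W₂) : E) = ρ g ((e x : W₂) : E)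

/-- The radius of the spherical space form `Sⁿ/ρ(Γ)`:
`rad = min over orbits Γu of max over orbits Γv of dist(Γu,Γv)`, where
`dist(Γu,Γv) = min_{g∈Γ} arccos ⟪ρ(g)u, v⟫`. -/
noncomputable def sphereQuotRadius [Fintype Γ] (ρ : Γ →* (E ≃ₗᵢ[ℝ] E)) : ℝ :=
  ⨅ u : {x : E // ‖x‖ = 1}, ⨆ v : {x : E // ‖x‖ = 1}, ⨅ g : Γ,
    Real.arccos ⟪ρ g u.1, v.1⟫

end Defs

section Helpers

variable {Γ : Type*} [CommGroup Γ] {E : Type*} [NormedAddCommGroup E] [InnerProductSpace ℝ E]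

theorem rho_inner_move (ρ : Γ →* (E ≃ₗᵢ[ℝ] E)) (g : Γ) (x y : E) :
    ⟪ρ g x, y⟫ = ⟪x, ρ g⁻¹ y⟫ := by
  have h : ρ g (ρ g⁻¹ y) = y := by
    have : (ρ g * ρ g⁻¹) y = y := by rw [← map_mul]; simp
    exact this
  conv_lhs => rw [← h]
  exact (ρ g).inner_map_map _ _

theorem span_orbit_transfer (ρ : Γ →* (E ≃ₗᵢ[ℝ] E)) (W : Submodule ℝ E)
    (hW : IsInvariantSubspace ρ W) (a q : E) (hq : q ∈ W) (w : E)
    (hw : w ∈ Submodule.span ℝ (Set.range fun g : Γ => ρ g a)) :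
    ∃ p ∈ W, ∀ g : Γ, ⟪w, ρ g q⟫ = ⟪a, ρ g p⟫ := by
  induction hw using Submodule.span_induction with
  | mem x hx =>
    obtain ⟨h, rfl⟩ := hx
    refine ⟨ρ h⁻¹ q, hW _ _ hq, fun g => ?_⟩
    have h1 : ρ h⁻¹ (ρ g q) = ρ g (ρ h⁻¹ q) := by
      have : (ρ h⁻¹ * ρ g) q = (ρ g * ρ h⁻¹) q := by
        rw [← map_mul, ← map_mul, mul_comm]
      exact this
    simp only [rho_inner_move, h1]
  | zero => exact ⟨0, W.zero_mem, fun g => by simp⟩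
  | add x y _ _ hx hy =>
    obtain ⟨p, hp, h1⟩ := hx
    obtain ⟨r, hr, h2⟩ := hy
    exact ⟨p + r, W.add_mem hp hr, fun g => by
      rw [inner_add_left, h1, h2, map_add, inner_add_right]⟩
  | smul c x _ hx =>
    obtain ⟨p, hp, h1⟩ := hx
    exact ⟨c • p, W.smul_mem c hp, fun g => by
      rw [inner_smul_left, h1, map_smul, inner_smul_right]; simp⟩

theorem span_orbit_eq (ρ : Γ →* (E ≃ₗᵢ[ℝ] E)) (W : Submodule ℝ E)
    (hW : IsIrreducibleSubrep ρ W) (a : E) (ha : a ∈ W) (ha0 : a ≠ 0) :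
    Submodule.span ℝ (Set.range fun g : Γ => ρ g a) = W := by
  have haS : a ∈ Submodule.span ℝ (Set.range fun g : Γ => ρ g a) :=
    Submodule.subset_span ⟨1, by simp⟩
  have hle : Submodule.span ℝ (Set.range fun g : Γ => ρ g a) ≤ W := by
    rw [Submodule.span_le]
    rintro _ ⟨g, rfl⟩
    exact hW.2.1 g a ha
  have hinv : IsInvariantSubspace ρ (Submodule.span ℝ (Set.range fun g : Γ => ρ g a)) := by
    intro g x hx
    induction hx using Submodule.span_induction with
    | mem x hx =>
      obtain ⟨h, rfl⟩ := hx
      refine Submodule.subset_span ⟨g * h, ?_⟩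
      simp [map_mul]
    | zero => simp
    | add x y _ _ hx hy => rw [map_add]; exact Submodule.add_mem _ hx hy
    | smul c x _ hx => rw [map_smul]; exact Submodule.smul_mem _ c hx
  rcases hW.2.2 _ hle hinv with h | h
  · rw [h, Submodule.mem_bot] at haS
    exact absurd haS ha0
  · exact h

theorem exists_orth_orbit [FiniteDimensional ℝ E] (ρ : Γ →* (E ≃ₗᵢ[ℝ] E))
    (W₁ W₂ : Submodule ℝ E)
    (horth : ∀ x ∈ W₁, ∀ y ∈ W₂, ⟪x, y⟫ = 0)
    (h₁ : IsIrreducibleSubrep ρ W₁)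
    (he : AreEquivalentSubreps ρ W₁ W₂) (u : E) :
    ∃ v : E, v ≠ 0 ∧ ∀ g : Γ, ⟪ρ g u, v⟫ = 0 := by
  obtain ⟨e, he⟩ := he
  obtain ⟨q, hq, hq0⟩ := W₁.exists_mem_ne_zero_of_ne_bot h₁.1
  have key₁ : ∀ x ∈ W₁, ⟪u, x⟫ = ⟪W₁.starProjection u, x⟫ := by
    intro x hx
    rw [Submodule.inner_starProjection_left_eq_right,
      Submodule.starProjection_eq_self_iff.2 hx]
  have key₂ : ∀ x : W₁, ⟪u, (e x : E)⟫ = ⟪((e.symm (W₂.orthogonalProjectionOnto u) : W₁) : E), (x : E)⟫ := by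
    intro x
    rw [← Submodule.coe_inner, ← e.inner_map_map, e.apply_symm_apply, Submodule.coe_inner]
    change _ = ⟪W₂.starProjection u, (e x : E)⟫
    rw [Submodule.inner_starProjection_left_eq_right,
      Submodule.starProjection_eq_self_iff.2 (e x).2]
  by_cases ha0 : W₁.starProjection u = 0
  · refine ⟨q, hq0, fun g => ?_⟩
    rw [rho_inner_move, key₁ _ (h₁.2.1 _ _ hq), ha0, inner_zero_left]
  · have hs := span_orbit_eq ρ W₁ h₁ (W₁.starProjection u)
      (W₁.starProjection_apply_mem u) ha0
    obtain ⟨p, hp, hpq⟩ := span_orbit_transfer ρ W₁ h₁.2.1 (W₁.starProjection u) q hq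
      ((e.symm (W₂.orthogonalProjectionOnto u) : W₁) : E) (by rw [hs]; exact Subtype.property _)
    refine ⟨(e ⟨q, hq⟩ : E) - p, ?_, fun g => ?_⟩
    · intro h
      have h2 : (e ⟨q, hq⟩ : E) = p := sub_eq_zero.1 h
      have h3 := horth p hp _ (e ⟨q, hq⟩).2
      rw [← h2, inner_self_eq_zero] at h3
      have h4 : (⟨q, hq⟩ : W₁) = 0 := by
        apply e.injective
        rw [map_zero]
        exact Subtype.ext h3
      exact hq0 (congrArg Subtype.val h4)
    · rw [rho_inner_move, map_sub, inner_sub_right, key₁ _ (h₁.2.1 _ _ hp), ← hpq,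
        ← he g⁻¹ ⟨q, hq⟩ (h₁.2.1 _ _ hq), key₂, sub_self]

theorem exists_inner_nonneg [Fintype Γ] [Nontrivial Γ] (ρ : Γ →* (E ≃ₗᵢ[ℝ] E))
    (hfree : ∀ g : Γ, g ≠ 1 → ∀ x : E, x ≠ 0 → ρ g x ≠ x) (u v : E) :
    ∃ g : Γ, 0 ≤ ⟪ρ g u, v⟫ := by
  by_contra! hneg
  obtain ⟨h, hh⟩ := exists_ne (1 : Γ)
  have hsum : ∑ g : Γ, ρ g u = 0 := by
    by_contra h0
    apply hfree h hh _ h0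
    rw [map_sum]
    have : ∀ g : Γ, ρ h (ρ g u) = ρ (h * g) u := fun g => by rw [map_mul]; rfl
    simp only [this]
    exact Equiv.sum_comp (Equiv.mulLeft h) (fun g => ρ g u)
  have h1 : ∑ g : Γ, ⟪ρ g u, v⟫ = 0 := by rw [← sum_inner, hsum, inner_zero_left]
  have h2 : ∑ g : Γ, ⟪ρ g u, v⟫ < 0 :=
    Finset.sum_neg (fun g _ => hneg g) Finset.univ_nonempty
  linarith

end Helpers

/-- Let `Γ` be a nontrivial finite abelian group and `ρ : Γ → O(n+1)` a fixed point free
orthogonal representation which is an orthogonal direct sum of `k ≥ 2` irreducible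
subrepresentations.  If two distinct summands are equivalent, then the space form
`Sⁿ/ρ(Γ)` has radius `π/2`; in particular for every unit vector `u` there is a unit
vector `v` with `⟪ρ(g)u, v⟫ ≤ 0` for all `g ∈ Γ`. -/
theorem radius_eq_half_pi_of_equivalent_summands_abelian
    {n k : ℕ} {Γ : Type*} [CommGroup Γ] [Fintype Γ] [Nontrivial Γ] (hk : 2 ≤ k)
    (ρ : Γ →* (EuclideanSpace ℝ (Fin (n + 1)) ≃ₗᵢ[ℝ] EuclideanSpace ℝ (Fin (n + 1))))
    (hfree : ∀ g : Γ, g ≠ 1 → ∀ x : EuclideanSpace ℝ (Fin (n + 1)), x ≠ 0 → ρ g x ≠ x)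
    (V : Fin k → Submodule ℝ (EuclideanSpace ℝ (Fin (n + 1))))
    (horth : ∀ i j, i ≠ j → ∀ x ∈ V i, ∀ y ∈ V j, ⟪x, y⟫ = 0)
    (hspan : (⨆ i, V i) = ⊤)
    (hirr : ∀ i, IsIrreducibleSubrep ρ (V i))
    (hequiv : ∃ i j, i ≠ j ∧ AreEquivalentSubreps ρ (V i) (V j)) :
    sphereQuotRadius ρ = Real.pi / 2 ∧
      ∀ u : EuclideanSpace ℝ (Fin (n + 1)), ‖u‖ = 1 →
        ∃ v : EuclideanSpace ℝ (Fin (n + 1)), ‖v‖ = 1 ∧ ∀ g : Γ, ⟪ρ g u, v⟫ ≤ 0 := by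
  obtain ⟨i, j, hij, he⟩ := hequiv
  have hex : ∀ u : EuclideanSpace ℝ (Fin (n + 1)), ‖u‖ = 1 →
      ∃ v : EuclideanSpace ℝ (Fin (n + 1)), ‖v‖ = 1 ∧ ∀ g : Γ, ⟪ρ g u, v⟫ ≤ 0 := by
    intro u _
    obtain ⟨v, hv0, hv⟩ := exists_orth_orbit ρ (V i) (V j) (horth i j hij) (hirr i) he u
    refine ⟨‖v‖⁻¹ • v, ?_, fun g => ?_⟩
    · rw [norm_smul, norm_inv, norm_norm, inv_mul_cancel₀ (norm_ne_zero_iff.2 hv0)]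
    · rw [inner_smul_right, hv, mul_zero]
  refine ⟨?_, hex⟩
  have hne : Nonempty {x : EuclideanSpace ℝ (Fin (n + 1)) // ‖x‖ = 1} :=
    ⟨⟨EuclideanSpace.single 0 1, by simp⟩⟩
  have hle : ∀ u v : {x : EuclideanSpace ℝ (Fin (n + 1)) // ‖x‖ = 1},
      (⨅ g : Γ, Real.arccos ⟪ρ g u.1, v.1⟫) ≤ Real.pi / 2 := by
    intro u v
    obtain ⟨g, hg⟩ := exists_inner_nonneg ρ hfree u.1 v.1
    exact (ciInf_le (Set.finite_range _).bddBelow g).trans (Real.arccos_le_pi_div_two.2 hg)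
  have hu : ∀ u : {x : EuclideanSpace ℝ (Fin (n + 1)) // ‖x‖ = 1},
      (⨆ v : {x : EuclideanSpace ℝ (Fin (n + 1)) // ‖x‖ = 1}, ⨅ g : Γ,
        Real.arccos ⟪ρ g u.1, v.1⟫) = Real.pi / 2 := by
    intro u
    apply le_antisymm (ciSup_le (hle u))
    obtain ⟨v, hv1, hv⟩ := hex u.1 u.2
    refine le_ciSup_of_le ⟨Real.pi / 2, ?_⟩ ⟨v, hv1⟩ (le_ciInf fun g => ?_)
    · rintro _ ⟨w, rfl⟩
      exact hle u w
    · have h1 : ¬ Real.arccos ⟪ρ g u.1, v⟫ < Real.pi / 2 := by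
        rw [Real.arccos_lt_pi_div_two]
        exact not_lt.2 (hv g)
      exact not_lt.1 h1
  unfold sphereQuotRadius
  simp only [hu, ciInf_const]
end

section
/- Let Γ be a nontrivial finite group. There exists a natural number k₀ (depending only on Γ) such that: for every fixed point free orthogonal representation ρ: Γ → O(n+1) that decomposes as an orthogonal direct sum of k ≥ k₀ irreducible subrepresentations, the quotient S^n/ρ(Γ) has radius π/2. -/
open scoped RealInnerProductSpace

/-- For every nontrivial finite group `Γ` there is a `k₀` (depending only on `Γ`) such
that every fixed point free orthogonal representation `ρ : Γ → O(n+1)` decomposing as an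
orthogonal direct sum of `k ≥ k₀` irreducible subrepresentations yields a space form
`Sⁿ/ρ(Γ)` of radius `π/2`. -/
theorem exists_k0_radius_eq_half_pi
    {Γ : Type*} [Group Γ] [Fintype Γ] [Nontrivial Γ] :
    ∃ k₀ : ℕ, ∀ (n k : ℕ)
      (ρ : Γ →* (EuclideanSpace ℝ (Fin (n + 1)) ≃ₗᵢ[ℝ] EuclideanSpace ℝ (Fin (n + 1))))
      (V : Fin k → Submodule ℝ (EuclideanSpace ℝ (Fin (n + 1)))),
      (∀ g : Γ, g ≠ 1 → ∀ x : EuclideanSpace ℝ (Fin (n + 1)), x ≠ 0 → ρ g x ≠ x) →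
      (∀ i j, i ≠ j → ∀ x ∈ V i, ∀ y ∈ V j, ⟪x, y⟫ = 0) →
      (⨆ i, V i) = ⊤ →
      (∀ i, IsIrreducibleSubrep ρ (V i)) →
      k₀ ≤ k →
      sphereQuotRadius ρ = Real.pi / 2 := by
  classical
  refine ⟨Fintype.card Γ + 1, ?_⟩
  intro n k ρ V hfree horth _ hirr hk
  have hkn : k ≤ n + 1 := by
    have hne : ∀ i, ∃ x ∈ V i, x ≠ 0 := fun i => (Submodule.ne_bot_iff _).1 (hirr i).1
    choose x hxV hx0 using hne
    have hli : LinearIndependent ℝ x := by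
      apply linearIndependent_of_ne_zero_of_inner_eq_zero (𝕜 := ℝ) hx0
      intro i j hij
      exact horth i j hij _ (hxV i) _ (hxV j)
    have := hli.fintype_card_le_finrank
    simpa using this
  obtain ⟨h, hh⟩ := exists_ne (1 : Γ)
  -- orbit sums vanish
  have hsum : ∀ u : EuclideanSpace ℝ (Fin (n + 1)), ∑ g : Γ, ρ g u = 0 := by
    intro u
    by_contra hne
    apply hfree h hh _ hne
    rw [map_sum]
    have : ∀ g, ρ h (ρ g u) = ρ (h * g) u := fun g => by rw [map_mul]; rfl
    simp only [this]
    exact Equiv.sum_comp (Equiv.mulLeft h) (fun g => ρ g u)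
  have hbdd : ∀ u v : EuclideanSpace ℝ (Fin (n + 1)),
      BddBelow (Set.range fun g : Γ => Real.arccos ⟪ρ g u, v⟫) :=
    fun u v => ⟨0, by rintro _ ⟨g, rfl⟩; exact Real.arccos_nonneg _⟩
  have hup : ∀ u v : EuclideanSpace ℝ (Fin (n + 1)),
      (⨅ g : Γ, Real.arccos ⟪ρ g u, v⟫) ≤ Real.pi / 2 := by
    intro u v
    have h0 : ∑ g : Γ, ⟪ρ g u, v⟫ = 0 := by
      rw [← sum_inner, hsum, inner_zero_left]
    obtain ⟨g, -, hg⟩ := Finset.exists_le_of_sum_le (s := (Finset.univ : Finset Γ))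
      (f := fun _ => (0 : ℝ)) (g := fun g => ⟪ρ g u, v⟫) Finset.univ_nonempty (by simp [h0])
    exact (ciInf_le (hbdd u v) g).trans (Real.arccos_le_pi_div_two.2 hg)
  have hperp : ∀ u : EuclideanSpace ℝ (Fin (n + 1)), ∃ v : EuclideanSpace ℝ (Fin (n + 1)),
      ‖v‖ = 1 ∧ ∀ g : Γ, ⟪ρ g u, v⟫ = 0 := by
    intro u
    set S := Submodule.span ℝ (Set.range fun g : Γ => ρ g u) with hS
    have hlt : Module.finrank ℝ S < n + 1 :=
      lt_of_le_of_lt (finrank_range_le_card (R := ℝ) (fun g : Γ => ρ g u)) (by omega)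
    have hSne : Sᗮ ≠ ⊥ := by
      intro hb
      rw [Submodule.orthogonal_eq_bot_iff] at hb
      rw [hb, finrank_top, finrank_euclideanSpace_fin] at hlt
      exact lt_irrefl _ hlt
    obtain ⟨w, hw, hw0⟩ := (Submodule.ne_bot_iff _).1 hSne
    refine ⟨‖w‖⁻¹ • w, ?_, fun g => ?_⟩
    · rw [norm_smul, norm_inv, norm_norm, inv_mul_cancel₀ (norm_ne_zero_iff.2 hw0)]
    · rw [inner_smul_right, (Submodule.mem_orthogonal _ _).1 hw _
        (Submodule.subset_span ⟨g, rfl⟩), mul_zero]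
  obtain ⟨v0, hv0, -⟩ := hperp 0
  haveI : Nonempty {x : EuclideanSpace ℝ (Fin (n + 1)) // ‖x‖ = 1} := ⟨⟨v0, hv0⟩⟩
  have key : ∀ u : {x : EuclideanSpace ℝ (Fin (n + 1)) // ‖x‖ = 1},
      (⨆ v : {x : EuclideanSpace ℝ (Fin (n + 1)) // ‖x‖ = 1}, ⨅ g : Γ,
        Real.arccos ⟪ρ g u.1, v.1⟫) = Real.pi / 2 := by
    intro u
    apply le_antisymm
    · exact ciSup_le fun v => hup u.1 v.1
    · obtain ⟨v, hv, hg⟩ := hperp u.1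
      refine le_ciSup_of_le ⟨Real.pi / 2, ?_⟩ ⟨v, hv⟩ ?_
      · rintro _ ⟨w, rfl⟩
        exact hup u.1 w.1
      · simp [hg]
  unfold sphereQuotRadius
  simp only [key, ciInf_const]
end
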